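/- Let μ, ν ∈ 𝒫_p(𝒳_1 × 𝒫_p(𝒳_2)). If CW̄_p(μ, ν) = CW̄_p(ν, μ) = 0 then μ = ν. -/

import Mathlib

open MeasureTheory ProbabilityTheory ENNReal Filter Topology

noncomputable section

namespace AWPaper

/-! ### Generic constructions -/

variable {α β : Type*}

/-- The set of couplings of two measures. -/
def Cpl [MeasurableSpace α] [MeasurableSpace β] (μ : Measure α) (ν : Measure β) :
    Set (Measure (α × β)) :=
  {π | π.map Prod.fst = μ ∧ π.map Prod.snd = ν}

/-- The `p`-Wasserstein distance (with values in `ℝ≥0∞`) associated to an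
`ℝ≥0∞`-valued distance function `d`. -/
def Wp [MeasurableSpace α] (p : ℝ) (d : α → α → ℝ≥0∞) (μ ν : Measure α) : ℝ≥0∞ :=
  ⨅ π ∈ Cpl μ ν, (∫⁻ z, d z.1 z.2 ^ p ∂π) ^ (1 / p)

/-- The topology generated by the open balls of an `ℝ≥0∞`-valued distance
function.  For a genuine metric this is the metric topology. -/
def ballTop (d : α → α → ℝ≥0∞) : TopologicalSpace α :=
  TopologicalSpace.generateFrom {s | ∃ x ε, 0 < ε ∧ s = {y | d x y < ε}}

/-- The product distance of two `ℝ≥0∞`-valued distances, `ℓ^p`-style. -/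
def prodDist (p : ℝ) (d₁ : α → α → ℝ≥0∞) (d₂ : β → β → ℝ≥0∞) :
    α × β → α × β → ℝ≥0∞ :=
  fun u v => (d₁ u.1 v.1 ^ p + d₂ u.2 v.2 ^ p) ^ (1 / p)

/-- Membership in the `p`-Wasserstein space: a probability measure with finite
`p`-th moment (w.r.t. the distance function `d`). -/
def MemPp [MeasurableSpace α] (p : ℝ) (d : α → α → ℝ≥0∞) (μ : Measure α) : Prop :=
  IsProbabilityMeasure μ ∧ ∃ x₀, ∫⁻ x, d x₀ x ^ p ∂μ ≠ ∞

/-- The weak topology on measures induced by integration of bounded continuous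
functions, for a given topology `τ` on the base space. -/
def weakTop [MeasurableSpace α] (τ : TopologicalSpace α) : TopologicalSpace (Measure α) :=
  TopologicalSpace.induced
    (fun μ => fun f : @BoundedContinuousFunction α ℝ τ _ => ∫ x, f x ∂μ)
    Pi.topologicalSpace

/-- The product topology built from two explicitly given topologies. -/
def prodTop (τ₁ : TopologicalSpace α) (τ₂ : TopologicalSpace β) : TopologicalSpace (α × β) :=
  TopologicalSpace.induced Prod.fst τ₁ ⊓ TopologicalSpace.induced Prod.snd τ₂

/-- An everywhere-defined version of the disintegration kernel: it agrees with
`Measure.condKernel` on finite measures. -/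
def condK [MeasurableSpace α] [MeasurableSpace β] [StandardBorelSpace β] [Nonempty β]
    (ρ : Measure (α × β)) : Kernel α β :=
  letI := Classical.dec (IsFiniteMeasure ρ)
  if h : IsFiniteMeasure ρ then @Measure.condKernel α β _ _ _ _ ρ h else 0

/-- The disintegration map `𝒫(A × B) → 𝒫(A × 𝒫(B))`. -/
def disint [MeasurableSpace α] [MeasurableSpace β] [StandardBorelSpace β] [Nonempty β]
    (μ : Measure (α × β)) : Measure (α × Measure β) :=
  μ.map (fun z => (z.1, condK μ z.1))

/-- The intensity ("und") map `𝒫(A × 𝒫(B)) → 𝒫(A × B)`. -/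
def und [MeasurableSpace α] [MeasurableSpace β] (μ : Measure (α × Measure β)) :
    Measure (α × β) :=
  μ.bind (fun z => (Measure.dirac z.1).prod z.2)

/-! ### Path spaces -/

variable {X : Type*} [MeasurableSpace X]

/-- The path-space distance `ρ̄((x_t),(y_t)) = (∑ ρ(x_t,y_t)^p)^{1/p}`. -/
def pathDist (p : ℝ) (d : X → X → ℝ≥0∞) {N : ℕ} :
    (Fin N → X) → (Fin N → X) → ℝ≥0∞ :=
  fun x y => (∑ t, d (x t) (y t) ^ p) ^ (1 / p)

/-- The first `t` coordinates of a path. -/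
def restr {N : ℕ} (t : ℕ) (h : t ≤ N) (x : Fin N → X) : Fin t → X :=
  fun s => x (Fin.castLE h s)

/-- The last `N - t` coordinates of a path. -/
def tailr {N : ℕ} (t : ℕ) (h : t ≤ N) (x : Fin N → X) : Fin (N - t) → X :=
  fun s => x ⟨t + s.1, by have := s.2; omega⟩

/-- A coupling `π` of two path measures is causal: for every `t` and Borel
`A ⊆ 𝒳^t`, `π((Y_1,…,Y_t) ∈ A | X) = π((Y_1,…,Y_t) ∈ A | X_1,…,X_t)` a.s. -/
def Causal {N : ℕ} (π : Measure ((Fin N → X) × (Fin N → X))) : Prop :=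
  ∀ (t : ℕ) (h : t ≤ N) (A : Set (Fin t → X)), MeasurableSet A →
    (π[fun z => A.indicator (fun _ => (1 : ℝ)) (restr t h z.2) |
        MeasurableSpace.comap Prod.fst inferInstance])
      =ᵐ[π]
    (π[fun z => A.indicator (fun _ => (1 : ℝ)) (restr t h z.2) |
        MeasurableSpace.comap (fun z => restr t h z.1) inferInstance])

/-- Bicausal couplings. -/
def Bicausal {N : ℕ} (π : Measure ((Fin N → X) × (Fin N → X))) : Prop :=
  Causal π ∧ Causal (π.map Prod.swap)

/-- The causal Wasserstein "distance" `CW_p`. -/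
def CW (p : ℝ) (d : X → X → ℝ≥0∞) {N : ℕ} (μ ν : Measure (Fin N → X)) : ℝ≥0∞ :=
  ⨅ π ∈ {π ∈ Cpl μ ν | Causal π}, (∫⁻ z, pathDist p d z.1 z.2 ^ p ∂π) ^ (1 / p)

/-- The symmetrized causal Wasserstein distance `SCW_p`. -/
def SCW (p : ℝ) (d : X → X → ℝ≥0∞) {N : ℕ} (μ ν : Measure (Fin N → X)) : ℝ≥0∞ :=
  max (CW p d μ ν) (CW p d ν μ)

/-- The adapted (nested, bicausal) Wasserstein distance `AW_p`. -/
def AW (p : ℝ) (d : X → X → ℝ≥0∞) {N : ℕ} (μ ν : Measure (Fin N → X)) : ℝ≥0∞ :=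
  ⨅ π ∈ {π ∈ Cpl μ ν | Bicausal π}, (∫⁻ z, pathDist p d z.1 z.2 ^ p ∂π) ^ (1 / p)

/-! ### Nested spaces (Pflug's nested distributions / Vershik's iterated spaces) -/

/-- A measurable space together with an `ℝ≥0∞`-valued distance. -/
structure QMS : Type 1 where
  carrier : Type
  inst : MeasurableSpace carrier
  dist : carrier → carrier → ℝ≥0∞

/-- The nested sequence of spaces: `nest X _ d p 0 = 𝒳` (this is `𝒳_N`), and
`nest X _ d p (k+1) = 𝒳 × 𝒫(nest X _ d p k)` with the nested distance
`D = (ρ^p + 𝒲_p^p)^{1/p}`.  Thus `𝒳_1` (for `N = k+1` time points) is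
`nest X _ d p k`. -/
def nest (X : Type) (mX : MeasurableSpace X) (d : X → X → ℝ≥0∞) (p : ℝ) : ℕ → QMS
  | 0 => ⟨X, mX, d⟩
  | (k + 1) =>
    let Q := nest X mX d p k
    ⟨X × @Measure Q.carrier Q.inst,
      @Prod.instMeasurableSpace _ _ mX (@Measure.instMeasurableSpace _ Q.inst),
      fun a b => (d a.1 b.1 ^ p + (@Wp _ Q.inst p Q.dist a.2 b.2) ^ p) ^ (1 / p)⟩

section NMapSec

variable (Y : Type) [mY : MeasurableSpace Y] [TopologicalSpace Y] [PolishSpace Y]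
  [BorelSpace Y] [Nonempty Y]

/-- The map `𝒩` sending the law of a process with `k+1` time steps to the
corresponding nested distribution, via iterated regular conditional laws. -/
def NMap (d : Y → Y → ℝ≥0∞) (p : ℝ) :
    ∀ k : ℕ, Measure (Fin (k + 1) → Y) →
      @Measure (nest Y mY d p k).carrier (nest Y mY d p k).inst
  | 0, μ =>
    letI : MeasurableSpace (nest Y mY d p 0).carrier := (nest Y mY d p 0).inst
    μ.map (fun x => x 0)
  | (k + 1), μ =>
    letI : MeasurableSpace (nest Y mY d p k).carrier := (nest Y mY d p k).inst
    letI : MeasurableSpace (nest Y mY d p (k + 1)).carrier := (nest Y mY d p (k + 1)).inst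
    (μ.map (fun x => x 0)).map
      (fun x₀ => (x₀, NMap d p k
        ((condK (μ.map (fun x => (x 0, fun s : Fin (k + 1) => x s.succ)))) x₀)))

end NMapSec

section PathStructures

variable {Y : Type*} [mY : MeasurableSpace Y]

/-- A process `L` is adapted: `L t` depends only on the first `t+1` coordinates. -/
def AdaptedProc {N : ℕ} (L : Fin N → (Fin N → Y) → ℝ) : Prop :=
  ∀ (t : Fin N) (x y : Fin N → Y), (∀ s : Fin N, s ≤ t → x s = y s) → L t x = L t y

/-- `τ` is a stopping time of the canonical filtration on the path space. -/
def IsStopTime {N : ℕ} (τ : (Fin N → Y) → Fin N) : Prop :=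
  ∀ t : Fin N,
    MeasurableSet[MeasurableSpace.comap (restr (X := Y) (t.1 + 1) t.2) inferInstance]
      {x | τ x = t}

/-- The optimal stopping value `v^L(μ)`. -/
def stopVal {N : ℕ} (L : Fin N → (Fin N → Y) → ℝ) (μ : Measure (Fin N → Y)) : ℝ :=
  ⨅ τ : {τ : (Fin N → Y) → Fin N // IsStopTime τ}, ∫ x, L (τ.1 x) x ∂μ

variable [TopologicalSpace Y]

/-- `AC(X̄)`: adapted processes which are continuous and bounded. -/
def ACbdd {N : ℕ} (L : Fin N → (Fin N → Y) → ℝ) : Prop :=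
  (∀ t, Continuous (L t)) ∧ AdaptedProc L ∧ ∃ C : ℝ, ∀ t x, |L t x| ≤ C

/-- `AC_p(X̄)`: adapted continuous processes of growth of order `p`. -/
def ACp (p : ℝ) (d : Y → Y → ℝ≥0∞) {N : ℕ} (L : Fin N → (Fin N → Y) → ℝ) : Prop :=
  (∀ t, Continuous (L t)) ∧ AdaptedProc L ∧
    ∃ (C : ℝ) (x₀ : Fin N → Y), ∀ t x, |L t x| ≤ C * (1 + ((pathDist p d x₀ x) ^ p).toReal)

/-- The optimal stopping topology (weak version, bounded continuous rewards). -/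
def stopTopW (N : ℕ) : TopologicalSpace (Measure (Fin N → Y)) :=
  ⨅ L : {L : Fin N → (Fin N → Y) → ℝ // ACbdd L},
    TopologicalSpace.induced (stopVal L.1) inferInstance

/-- The `𝒲_p`-optimal stopping topology. -/
def stopTopWp (p : ℝ) (d : Y → Y → ℝ≥0∞) (N : ℕ) :
    TopologicalSpace (Measure (Fin N → Y)) :=
  ⨅ L : {L : Fin N → (Fin N → Y) → ℝ // ACp p d L},
    TopologicalSpace.induced (stopVal L.1) inferInstance

variable [PolishSpace Y] [BorelSpace Y] [Nonempty Y]

/-- Hellwig's map `I_t`, sending `μ` to the joint law of the first `t`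
coordinates together with the conditional law of the remaining coordinates. -/
def infoMap (N t : ℕ) (h : t ≤ N) (μ : Measure (Fin N → Y)) :
    Measure ((Fin t → Y) × Measure (Fin (N - t) → Y)) :=
  μ.map (fun x => (restr t h x,
    condK (μ.map (fun y => (restr t h y, tailr t h y))) (restr t h x)))

/-- Hellwig's information topology (weak version). -/
def infoTopW (N : ℕ) : TopologicalSpace (Measure (Fin N → Y)) :=
  ⨅ (t : ℕ) (_ : 1 ≤ t) (h : t ≤ N - 1),
    TopologicalSpace.induced (infoMap N t (le_trans h (Nat.sub_le N 1)))
      (weakTop (prodTop Pi.topologicalSpace (weakTop Pi.topologicalSpace)))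

/-- The `𝒲_p`-information topology. -/
def infoTopWp (p : ℝ) (d : Y → Y → ℝ≥0∞) (N : ℕ) :
    TopologicalSpace (Measure (Fin N → Y)) :=
  ⨅ (t : ℕ) (_ : 1 ≤ t) (h : t ≤ N - 1),
    TopologicalSpace.induced (infoMap N t (le_trans h (Nat.sub_le N 1)))
      (ballTop (Wp p (prodDist p (pathDist p d) (Wp p (pathDist p d)))))

/-- Aldous' prediction process `Z_t^μ` (as a function of the path). -/
def predict (N : ℕ) (μ : Measure (Fin N → Y)) (t : ℕ) (h : t ≤ N) :
    (Fin N → Y) → Measure (Fin N → Y) :=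
  fun x => condK (μ.map (fun y => (restr t h y, y))) (restr t h x)

/-- Aldous' map `E`, sending `μ` to the joint law of the path together with its
prediction process. -/
def aldousMap (N : ℕ) (μ : Measure (Fin N → Y)) :
    Measure ((Fin N → Y) × (Fin (N + 1) → Measure (Fin N → Y))) :=
  μ.map (fun x =>
    (x, fun t : Fin (N + 1) => predict N μ t.1 (Nat.lt_succ_iff.mp t.2) x))

/-- Aldous' extended weak topology. -/
def aldousTopW (N : ℕ) : TopologicalSpace (Measure (Fin N → Y)) :=
  TopologicalSpace.induced (aldousMap N)
    (weakTop (prodTop Pi.topologicalSpace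
      (@Pi.topologicalSpace (Fin (N + 1)) (fun _ => Measure (Fin N → Y))
        (fun _ => weakTop Pi.topologicalSpace))))

/-- The extended `𝒲_p`-topology. -/
def aldousTopWp (p : ℝ) (d : Y → Y → ℝ≥0∞) (N : ℕ) :
    TopologicalSpace (Measure (Fin N → Y)) :=
  TopologicalSpace.induced (aldousMap N)
    (ballTop (Wp p (prodDist p (pathDist p d)
      (fun Z Z' : Fin (N + 1) → Measure (Fin N → Y) =>
        (∑ t, Wp p (pathDist p d) (Z t) (Z' t) ^ p) ^ (1 / p)))))

end PathStructures

/-! ### The lifted two-time-point space `𝒳₁ × 𝒫_p(𝒳₂)` -/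

section Lifted

variable {A B : Type*} [MeasurableSpace A] [MeasurableSpace B]

/-- The nested distance on `𝒳₁ × 𝒫_p(𝒳₂)`. -/
def liftDist (p : ℝ) (dA : A → A → ℝ≥0∞) (dB : B → B → ℝ≥0∞) :
    (A × Measure B) → (A × Measure B) → ℝ≥0∞ :=
  fun u v => (dA u.1 v.1 ^ p + Wp p dB u.2 v.2 ^ p) ^ (1 / p)

/-- `η` is a version of the measure-valued conditional expectation
`E_γ[X̂₂ | Y⃗]` (i.e. the barycenter of a regular conditional law of `X̂₂`
given `Y⃗ = (Y₁, Ŷ₂)`). -/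
def IsCondBar (γ : Measure ((A × Measure B) × (A × Measure B)))
    (η : (A × Measure B) × (A × Measure B) → Measure B) : Prop :=
  (∃ g : (A × Measure B) → Measure B, Measurable g ∧ ∀ z, η z = g z.2) ∧
  (∀ z, IsProbabilityMeasure (η z)) ∧
  ∀ S : Set (A × Measure B), MeasurableSet S → ∀ E : Set B, MeasurableSet E →
    ∫⁻ z in {z | z.2 ∈ S}, η z E ∂γ = ∫⁻ z in {z | z.2 ∈ S}, z.1.2 E ∂γ

/-- `AW̄_p`, the `p`-Wasserstein distance on `𝒫_p(𝒳₁ × 𝒫_p(𝒳₂))`. -/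
def AWbar (p : ℝ) (dA : A → A → ℝ≥0∞) (dB : B → B → ℝ≥0∞)
    (μ ν : Measure (A × Measure B)) : ℝ≥0∞ :=
  Wp p (liftDist p dA dB) μ ν

/-- `CW̄_p`, the lifted causal Wasserstein "distance". -/
def CWbar (p : ℝ) (dA : A → A → ℝ≥0∞) (dB : B → B → ℝ≥0∞)
    (μ ν : Measure (A × Measure B)) : ℝ≥0∞ :=
  ⨅ γ ∈ Cpl μ ν, ⨅ η ∈ {η | IsCondBar γ η},
    (∫⁻ z, (dA z.1.1 z.2.1 ^ p + Wp p dB (η z) z.2.2 ^ p) ∂γ) ^ (1 / p)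

/-- `SCW̄_p`, the symmetrization of `CW̄_p`. -/
def SCWbar (p : ℝ) (dA : A → A → ℝ≥0∞) (dB : B → B → ℝ≥0∞)
    (μ ν : Measure (A × Measure B)) : ℝ≥0∞ :=
  max (CWbar p dA dB μ ν) (CWbar p dA dB ν μ)

/-- Membership in `𝒫_p(𝒳₁ × 𝒫_p(𝒳₂))`: a probability measure, concentrated on
`𝒳₁ × 𝒫_p(𝒳₂)`, with finite `p`-th moment for the nested distance. -/
def MemPpLift (p : ℝ) (dA : A → A → ℝ≥0∞) (dB : B → B → ℝ≥0∞)
    (μ : Measure (A × Measure B)) : Prop :=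
  IsProbabilityMeasure μ ∧ (∀ᵐ z ∂μ, MemPp p dB z.2) ∧
    ∃ z₀ : A × Measure B, MemPp p dB z₀.2 ∧ ∫⁻ z, liftDist p dA dB z₀ z ^ p ∂μ ≠ ∞

/-- Two-time-point causality: given a coupling `π` of measures on products
`A₁ × B₁` and `A₂ × B₂`, the conditional law of `Y₁` given `X = (X₁, X₂)`
coincides with the conditional law of `Y₁` given `X₁`. -/
def Causal2 {A₁ B₁ A₂ B₂ : Type*} [MeasurableSpace A₁] [MeasurableSpace B₁]
    [MeasurableSpace A₂] [MeasurableSpace B₂]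
    (π : Measure ((A₁ × B₁) × (A₂ × B₂))) : Prop :=
  ∀ S : Set A₂, MeasurableSet S →
    (π[fun z => S.indicator (fun _ => (1 : ℝ)) z.2.1 |
        MeasurableSpace.comap Prod.fst inferInstance])
      =ᵐ[π]
    (π[fun z => S.indicator (fun _ => (1 : ℝ)) z.2.1 |
        MeasurableSpace.comap (fun z => z.1.1) inferInstance])

/-- The two-time-point causal Wasserstein "distance" on `𝒫_p(𝒳₁ × 𝒳₂)`. -/
def CW2 (p : ℝ) (dA : A → A → ℝ≥0∞) (dB : B → B → ℝ≥0∞)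
    (μ ν : Measure (A × B)) : ℝ≥0∞ :=
  ⨅ π ∈ {π ∈ Cpl μ ν | Causal2 π},
    (∫⁻ z, (dA z.1.1 z.2.1 ^ p + dB z.1.2 z.2.2 ^ p) ∂π) ^ (1 / p)

end Lifted

/-!
In a coupling of `μ` and `ν` of small cost, the measure `Ŷ₂` is close to the conditional
barycenter of `X̂₂` given `Y⃗`, and `X₁` is close to `Y₁`. For `T (x, m) = G x + ∫ F dm`, with `G`
and `F` bounded and uniformly continuous, and convex `φ`, Jensen's inequality for conditional
expectations therefore gives, in the limit of vanishing cost, `∫ φ ∘ T dν ≤ ∫ φ ∘ T dμ`.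
Exchanging `μ` and `ν` and taking `φ = exp`, all exponential moments of the functions `T` agree
under `μ` and `ν`. As the functions `T` form a vector space, the law of each `T` is the same under
`μ` and `ν` by analyticity of the moment generating function, hence so are their joint laws by the
Cramér–Wold device; and the functions `T` generate the σ-algebra of `𝒳₁ × 𝒫(𝒳₂)`.
-/

section Giry

variable {Ω B : Type*} [MeasurableSpace Ω] [MeasurableSpace B]

lemma measurable_integral_measure {F : B → ℝ} (hF : Measurable F) :
    Measurable fun m : Measure B => ∫ x, F x ∂m :=
  (hF.stronglyMeasurable.integral_kernel (κ := ⟨id, measurable_id⟩)).measurable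

lemma bind_eq_comp_const_apply (γ : Measure Ω) {κ : Ω → Measure B} (hκ : Measurable κ) :
    γ.bind κ = ((⟨κ, hκ⟩ : Kernel Ω B) ∘ₖ Kernel.const Unit γ) () := by
  rw [← Measure.comp_eq_comp_const_apply, Kernel.coe_mk]

lemma integral_bind {γ : Measure Ω} {κ : Ω → Measure B} (hκ : Measurable κ) {F : B → ℝ}
    (hF : Integrable F (γ.bind κ)) :
    ∫ x, F x ∂γ.bind κ = ∫ ω, ∫ x, F x ∂κ ω ∂γ := by
  rw [bind_eq_comp_const_apply γ hκ] at hF ⊢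
  exact Kernel.integral_comp hF

lemma integrable_integral_of_bind {γ : Measure Ω} {κ : Ω → Measure B} (hκ : Measurable κ)
    {F : B → ℝ} (hF : Integrable F (γ.bind κ)) :
    Integrable (fun ω => ∫ x, F x ∂κ ω) γ := by
  rw [bind_eq_comp_const_apply γ hκ] at hF
  exact hF.integral_comp

lemma bind_mono_left {γ γ' : Measure Ω} (hγ : γ ≤ γ') {κ : Ω → Measure B} (hκ : Measurable κ) :
    γ.bind κ ≤ γ'.bind κ := by
  refine Measure.le_iff.2 fun E hE => ?_
  rw [Measure.bind_apply hE hκ.aemeasurable, Measure.bind_apply hE hκ.aemeasurable]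
  exact lintegral_mono' hγ le_rfl

end Giry

section CondBar

variable {A B : Type*} [MeasurableSpace A] [MeasurableSpace B]
  {γ : Measure ((A × Measure B) × (A × Measure B))}
  {η : (A × Measure B) × (A × Measure B) → Measure B}

lemma IsCondBar.measurable (hη : IsCondBar γ η) : Measurable η := by
  obtain ⟨⟨g, hg, hgη⟩, -, -⟩ := hη
  exact funext hgη ▸ hg.comp measurable_snd

lemma IsCondBar.bind_restrict_eq (hη : IsCondBar γ η) {S : Set (A × Measure B)}
    (hS : MeasurableSet S) :
    (γ.restrict (Prod.snd ⁻¹' S)).bind η = (γ.restrict (Prod.snd ⁻¹' S)).bind fun z => z.1.2 := by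
  ext E hE
  rw [Measure.bind_apply hE hη.measurable.aemeasurable, Measure.bind_apply hE (by fun_prop)]
  exact hη.2.2 S hS E hE

lemma IsCondBar.condExp_integral_ae_eq [IsFiniteMeasure γ] (hη : IsCondBar γ η) {F : B → ℝ}
    (hF : Measurable F) (hFi : Integrable F (γ.bind fun z => z.1.2)) :
    γ[fun z => ∫ x, F x ∂z.1.2 | MeasurableSpace.comap Prod.snd inferInstance]
      =ᵐ[γ] fun z => ∫ x, F x ∂η z := by
  have hX : Measurable fun z : (A × Measure B) × (A × Measure B) => z.1.2 := by fun_prop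
  have hη_bind : γ.bind η = γ.bind fun z => z.1.2 := by
    simpa using hη.bind_restrict_eq MeasurableSet.univ
  refine (ae_eq_condExp_of_forall_setIntegral_eq measurable_snd.comap_le
    (integrable_integral_of_bind hX hFi) (fun _ _ _ => ?_) ?_ ?_).symm
  · exact (integrable_integral_of_bind hη.measurable (hη_bind ▸ hFi)).integrableOn
  · rintro _ ⟨S, hS, rfl⟩ -
    have hFS : Integrable F ((γ.restrict (Prod.snd ⁻¹' S)).bind fun z => z.1.2) :=
      hFi.mono_measure (bind_mono_left Measure.restrict_le_self hX)
    rw [← integral_bind hX hFS, ← hη.bind_restrict_eq hS,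
      integral_bind hη.measurable (hη.bind_restrict_eq hS ▸ hFS)]
  · obtain ⟨g, hg, hgη⟩ := hη.1
    simp only [hgη]
    exact (((measurable_integral_measure hF).comp hg).comp
      (comap_measurable Prod.snd)).aestronglyMeasurable

end CondBar

lemma edist_integral_le_lintegral_edist {Ω : Type*} [MeasurableSpace Ω] {γ : Measure Ω}
    {f g : Ω → ℝ} (hf : Integrable f γ) (hg : Integrable g γ) :
    edist (∫ ω, f ω ∂γ) (∫ ω, g ω ∂γ) ≤ ∫⁻ ω, edist (f ω) (g ω) ∂γ := by
  simp only [edist_eq_enorm_sub]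
  rw [← integral_sub hf hg]
  exact enorm_integral_le_lintegral_enorm _

section Jensen

variable {Ω : Type*} {m mΩ : MeasurableSpace Ω} {γ : Measure Ω} [IsFiniteMeasure γ]

lemma integrable_comp_of_ae_abs_le {φ : ℝ → ℝ} (hφ : Continuous φ) {f : Ω → ℝ}
    (hf : AEStronglyMeasurable f γ) {C : ℝ} (hC : ∀ᵐ ω ∂γ, |f ω| ≤ C) :
    Integrable (fun ω => φ (f ω)) γ := by
  obtain ⟨D, hD⟩ := (isCompact_Icc (a := -C) (b := C)).exists_bound_of_continuousOn hφ.continuousOn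
  exact Integrable.of_bound (hφ.comp_aestronglyMeasurable hf) D
    (hC.mono fun ω hω => hD _ (abs_le.1 hω))

lemma integral_convexOn_condExp_le (hm : m ≤ mΩ) {φ : ℝ → ℝ} (hφ : ConvexOn ℝ Set.univ φ)
    {f : Ω → ℝ} (hf : AEStronglyMeasurable f γ) {C : ℝ} (hC : ∀ᵐ ω ∂γ, |f ω| ≤ C) :
    ∫ ω, φ ((γ[f | m]) ω) ∂γ ≤ ∫ ω, φ (f ω) ∂γ := by
  have hφc : Continuous φ := hφ.locallyLipschitz.continuous
  have hφf : Integrable (φ ∘ f) γ := integrable_comp_of_ae_abs_le hφc hf hC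
  calc ∫ ω, φ ((γ[f | m]) ω) ∂γ
      ≤ ∫ ω, (γ[φ ∘ f | m]) ω ∂γ :=
        integral_mono_ae
          (integrable_comp_of_ae_abs_le hφc integrable_condExp.aestronglyMeasurable
            (ae_bdd_abs_condExp_of_ae_bdd_abs hC))
          integrable_condExp
          (hφ.map_condExp_le_of_finiteDimensional hm (Integrable.of_bound hf C hC) hφf)
    _ = ∫ ω, φ (f ω) ∂γ := integral_condExp hm

end Jensen

section Modulus

lemma exists_edist_le_add_mul_rpow {A : Type*} [PseudoEMetricSpace A] {p : ℝ} (hp : 0 < p)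
    {f : A → ℝ} (hf : UniformContinuous f) {C : ℝ} (hC : ∀ x y, dist (f x) (f y) ≤ C)
    {ε : ℝ≥0∞} (hε : 0 < ε) :
    ∃ K : NNReal, ∀ x y, edist (f x) (f y) ≤ ε + K * edist x y ^ p := by
  obtain ⟨δ₀, hδ₀, hδ⟩ := EMetric.uniformContinuous_iff.1 hf ε hε
  obtain ⟨δ, hδ_pos, hδ_lt⟩ := ENNReal.lt_iff_exists_nnreal_btwn.1 hδ₀
  have hδp : δ ^ p ≠ 0 := (NNReal.rpow_pos (by exact_mod_cast hδ_pos)).ne'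
  refine ⟨C.toNNReal * (δ ^ p)⁻¹, fun x y => ?_⟩
  rcases lt_or_ge (edist x y) δ with hxy | hxy
  · exact (hδ (hxy.trans hδ_lt)).le.trans le_self_add
  · calc edist (f x) (f y) ≤ C.toNNReal := by
          rw [edist_dist]; exact ENNReal.ofReal_le_ofReal (hC x y)
      _ = ↑(C.toNNReal * (δ ^ p)⁻¹) * (δ : ℝ≥0∞) ^ p := by
          rw [← ENNReal.coe_rpow_of_nonneg _ hp.le, ← ENNReal.coe_mul,
            inv_mul_cancel_right₀ hδp]
      _ ≤ ↑(C.toNNReal * (δ ^ p)⁻¹) * edist x y ^ p := by gcongr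
      _ ≤ ε + ↑(C.toNNReal * (δ ^ p)⁻¹) * edist x y ^ p := le_add_self

lemma Wp_rpow {B : Type*} [MeasurableSpace B] {p : ℝ} (hp : 0 < p) (d : B → B → ℝ≥0∞)
    (m n : Measure B) :
    Wp p d m n ^ p = ⨅ π ∈ Cpl m n, ∫⁻ z, d z.1 z.2 ^ p ∂π := by
  have h := (ENNReal.orderIsoRpow p hp).map_iInf₂
    fun (π : Measure (B × B)) (_ : π ∈ Cpl m n) => (∫⁻ z, d z.1 z.2 ^ p ∂π) ^ (1 / p)
  simpa only [ENNReal.orderIsoRpow_apply, ← ENNReal.rpow_mul, one_div_mul_cancel hp.ne',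
    ENNReal.rpow_one, Wp] using h

lemma isProbabilityMeasure_of_mem_Cpl {α β : Type*} [MeasurableSpace α] [MeasurableSpace β]
    {μ : Measure α} [IsProbabilityMeasure μ] {ν : Measure β} {π : Measure (α × β)}
    (hπ : π ∈ Cpl μ ν) : IsProbabilityMeasure π :=
  have : IsProbabilityMeasure (π.map Prod.fst) := hπ.1 ▸ inferInstance
  Measure.isProbabilityMeasure_of_map Prod.fst

lemma edist_integral_le_of_mem_Cpl {α : Type*} [MeasurableSpace α] {m n : Measure α} {F : α → ℝ}
    (hm : Integrable F m) (hn : Integrable F n) {π : Measure (α × α)} (hπ : π ∈ Cpl m n) :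
    edist (∫ x, F x ∂m) (∫ x, F x ∂n) ≤ ∫⁻ z, edist (F z.1) (F z.2) ∂π := by
  obtain ⟨rfl, rfl⟩ := hπ
  rw [integral_map measurable_fst.aemeasurable hm.aestronglyMeasurable,
    integral_map measurable_snd.aemeasurable hn.aestronglyMeasurable]
  exact edist_integral_le_lintegral_edist (hm.comp_measurable measurable_fst)
    (hn.comp_measurable measurable_snd)

lemma edist_integral_le_add_mul_Wp_rpow {B : Type*} [MeasurableSpace B] {p : ℝ} (hp : 0 < p)
    {d : B → B → ℝ≥0∞} {F : B → ℝ} {ε : ℝ≥0∞} {K : NNReal}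
    (hF : ∀ x y, edist (F x) (F y) ≤ ε + K * d x y ^ p) {m n : Measure B}
    [IsProbabilityMeasure m] [IsProbabilityMeasure n] (hm : Integrable F m)
    (hn : Integrable F n) :
    edist (∫ x, F x ∂m) (∫ x, F x ∂n) ≤ ε + K * Wp p d m n ^ p := by
  have : Nonempty (Cpl m n) := ⟨⟨m.prod n, by simp [Cpl]⟩⟩
  rw [Wp_rpow hp, iInf_subtype', ENNReal.mul_iInf (by simp), ENNReal.add_iInf]
  refine le_iInf fun ⟨π, hπ⟩ => ?_
  have := isProbabilityMeasure_of_mem_Cpl hπ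
  calc edist (∫ x, F x ∂m) (∫ x, F x ∂n)
      ≤ ∫⁻ z, edist (F z.1) (F z.2) ∂π := edist_integral_le_of_mem_Cpl hm hn hπ
    _ ≤ ∫⁻ z, (ε + K * d z.1 z.2 ^ p) ∂π := lintegral_mono fun z => hF _ _
    _ = ε + K * ∫⁻ z, d z.1 z.2 ^ p ∂π := by
        rw [lintegral_add_left measurable_const, lintegral_const, measure_univ, mul_one,
          lintegral_const_mul' _ _ ENNReal.coe_ne_top]

end Modulus

section ConvexOrder

open BoundedContinuousFunction

variable {A B : Type*} [TopologicalSpace A] [TopologicalSpace B] [MeasurableSpace B]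
  [OpensMeasurableSpace B]

/-- The test functions on `A × 𝒫(B)` used to compare laws: a function of the point plus a linear
functional of the measure. -/
def testFun (G : A →ᵇ ℝ) (F : B →ᵇ ℝ) (z : A × Measure B) : ℝ :=
  G z.1 + ∫ x, F x ∂z.2

lemma abs_testFun_le (G : A →ᵇ ℝ) (F : B →ᵇ ℝ) {z : A × Measure B}
    (_ : IsProbabilityMeasure z.2) : |testFun G F z| ≤ ‖G‖ + ‖F‖ :=
  (abs_add_le _ _).trans (add_le_add (G.norm_coe_le_norm _) (F.norm_integral_le_norm z.2))

variable [MeasurableSpace A] [OpensMeasurableSpace A]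

@[fun_prop]
lemma measurable_testFun (G : A →ᵇ ℝ) (F : B →ᵇ ℝ) : Measurable (testFun G F) :=
  (G.continuous.measurable.comp measurable_fst).add
    ((measurable_integral_measure F.continuous.measurable).comp measurable_snd)

variable {γ : Measure ((A × Measure B) × (A × Measure B))} [IsFiniteMeasure γ]
  {η : (A × Measure B) × (A × Measure B) → Measure B}

lemma IsCondBar.condExp_testFun_ae_eq (hη : IsCondBar γ η)
    (hγ : ∀ᵐ z ∂γ, IsProbabilityMeasure z.1.2) (G : A →ᵇ ℝ) (F : B →ᵇ ℝ) :
    γ[fun z => testFun G F (z.2.1, z.1.2) | MeasurableSpace.comap Prod.snd inferInstance]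
      =ᵐ[γ] fun z => testFun G F (z.2.1, η z) := by
  have hX : Measurable fun z : (A × Measure B) × (A × Measure B) => z.1.2 := by fun_prop
  have hbind : IsFiniteMeasure (γ.bind fun z => z.1.2) := by
    refine ⟨?_⟩
    rw [Measure.bind_apply .univ hX.aemeasurable,
      lintegral_congr_ae (hγ.mono fun z hz => hz.measure_univ), lintegral_one]
    exact measure_lt_top γ _
  have hFi := F.integrable (γ.bind fun z => z.1.2)
  have hG : StronglyMeasurable[MeasurableSpace.comap Prod.snd inferInstance]
      fun z : (A × Measure B) × (A × Measure B) => G z.2.1 :=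
    ((G.continuous.measurable.comp measurable_fst).comp
      (comap_measurable Prod.snd)).stronglyMeasurable
  have hGi : Integrable (fun z : (A × Measure B) × (A × Measure B) => G z.2.1) γ :=
    .of_bound (hG.mono measurable_snd.comap_le).aestronglyMeasurable ‖G‖
      (.of_forall fun z => G.norm_coe_le_norm _)
  refine (condExp_add hGi (integrable_integral_of_bind hX hFi) _).trans ?_
  rw [condExp_of_stronglyMeasurable measurable_snd.comap_le hG hGi]
  exact (EventuallyEq.refl _ _).add (hη.condExp_integral_ae_eq F.continuous.measurable hFi)

lemma IsCondBar.integral_convexOn_testFun_le (hη : IsCondBar γ η)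
    (hγ : ∀ᵐ z ∂γ, IsProbabilityMeasure z.1.2) {φ : ℝ → ℝ} (hφ : ConvexOn ℝ Set.univ φ)
    (G : A →ᵇ ℝ) (F : B →ᵇ ℝ) :
    ∫ z, φ (testFun G F (z.2.1, η z)) ∂γ ≤ ∫ z, φ (testFun G F (z.2.1, z.1.2)) ∂γ := by
  have hbar := hη.condExp_testFun_ae_eq hγ G F
  calc ∫ z, φ (testFun G F (z.2.1, η z)) ∂γ
      = ∫ z, φ ((γ[fun z => testFun G F (z.2.1, z.1.2) |
          MeasurableSpace.comap Prod.snd inferInstance]) z) ∂γ :=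
        integral_congr_ae (hbar.mono fun z hz => congrArg φ hz.symm)
    _ ≤ ∫ z, φ (testFun G F (z.2.1, z.1.2)) ∂γ :=
        integral_convexOn_condExp_le measurable_snd.comap_le hφ
          (by fun_prop : Measurable _).aestronglyMeasurable
          (hγ.mono fun z hz => abs_testFun_le G F hz)

lemma edist_integral_comp_testFun_le {Ω : Type*} [MeasurableSpace Ω] {P : Measure Ω}
    [IsFiniteMeasure P] {G : A →ᵇ ℝ} {F : B →ᵇ ℝ} {φ : ℝ → ℝ} (hφ : Continuous φ) {L : NNReal}
    (hL : LipschitzOnWith L φ (Set.Icc (-(‖G‖ + ‖F‖)) (‖G‖ + ‖F‖)))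
    {u v : Ω → A × Measure B} (hu : Measurable u) (hv : Measurable v)
    (hup : ∀ᵐ ω ∂P, IsProbabilityMeasure (u ω).2)
    (hvp : ∀ᵐ ω ∂P, IsProbabilityMeasure (v ω).2) :
    edist (∫ ω, φ (testFun G F (u ω)) ∂P) (∫ ω, φ (testFun G F (v ω)) ∂P) ≤
      L * ∫⁻ ω, edist (testFun G F (u ω)) (testFun G F (v ω)) ∂P := by
  have hint {w : Ω → A × Measure B} (hw : Measurable w)
      (hwp : ∀ᵐ ω ∂P, IsProbabilityMeasure (w ω).2) :
      Integrable (fun ω => φ (testFun G F (w ω))) P :=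
    integrable_comp_of_ae_abs_le hφ ((measurable_testFun G F).comp hw).aestronglyMeasurable
      (hwp.mono fun ω hω => abs_testFun_le G F hω)
  refine (edist_integral_le_lintegral_edist (hint hu hup) (hint hv hvp)).trans ?_
  rw [← lintegral_const_mul' _ _ ENNReal.coe_ne_top]
  refine lintegral_mono_ae ?_
  filter_upwards [hup, hvp] with ω hu hv
  exact hL (abs_le.1 (abs_testFun_le G F hu)) (abs_le.1 (abs_testFun_le G F hv))

lemma IsCondBar.integral_comp_testFun_sub_le (hη : IsCondBar γ η)
    (hγ₁ : ∀ᵐ z ∂γ, IsProbabilityMeasure z.1.2) (hγ₂ : ∀ᵐ z ∂γ, IsProbabilityMeasure z.2.2)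
    {G : A →ᵇ ℝ} {F : B →ᵇ ℝ} {φ : ℝ → ℝ} (hφ : ConvexOn ℝ Set.univ φ) {L : NNReal}
    (hL : LipschitzOnWith L φ (Set.Icc (-(‖G‖ + ‖F‖)) (‖G‖ + ‖F‖))) :
    ENNReal.ofReal (∫ z, φ (testFun G F z.2) ∂γ - ∫ z, φ (testFun G F z.1) ∂γ) ≤
      L * ∫⁻ z, (edist (G z.1.1) (G z.2.1) + edist (∫ x, F x ∂η z) (∫ x, F x ∂z.2.2)) ∂γ := by
  have hφc := hφ.locallyLipschitz.continuous
  have hηm := hη.measurable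
  have hfst := edist_integral_comp_testFun_le hφc hL (u := Prod.fst)
    (v := fun z => (z.2.1, z.1.2)) measurable_fst (by fun_prop) hγ₁ hγ₁
  have hsnd := edist_integral_comp_testFun_le hφc hL (u := fun z => (z.2.1, η z))
    (v := Prod.snd) (by fun_prop) measurable_snd (.of_forall hη.2.1) hγ₂
  have hjensen := hη.integral_convexOn_testFun_le hγ₁ hφ G F
  set I₁ := ∫ z, φ (testFun G F z.1) ∂γ
  set I₂ := ∫ z, φ (testFun G F z.2) ∂γ
  set J := ∫ z, φ (testFun G F (z.2.1, z.1.2)) ∂γ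
  set Jη := ∫ z, φ (testFun G F (z.2.1, η z)) ∂γ
  calc ENNReal.ofReal (I₂ - I₁)
      ≤ ENNReal.ofReal (dist I₁ J + dist Jη I₂) := by
        refine ENNReal.ofReal_le_ofReal ?_
        rw [Real.dist_eq, Real.dist_eq]
        linarith [neg_le_abs (I₁ - J), neg_le_abs (Jη - I₂)]
    _ = edist I₁ J + edist Jη I₂ := by
        rw [ENNReal.ofReal_add dist_nonneg dist_nonneg, ← edist_dist, ← edist_dist]
    _ ≤ L * ∫⁻ z, edist (testFun G F z.1) (testFun G F (z.2.1, z.1.2)) ∂γ +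
          L * ∫⁻ z, edist (testFun G F (z.2.1, η z)) (testFun G F z.2) ∂γ :=
        add_le_add hfst hsnd
    _ = L * ∫⁻ z, (edist (G z.1.1) (G z.2.1) + edist (∫ x, F x ∂η z) (∫ x, F x ∂z.2.2)) ∂γ := by
        rw [← mul_add, ← lintegral_add_left (by fun_prop)]
        simp only [testFun, edist_add_left, edist_add_right]

end ConvexOrder

section CWbar

open BoundedContinuousFunction

lemma exists_lintegral_lt_of_CWbar_eq_zero {A B : Type*} [MeasurableSpace A] [MeasurableSpace B]
    {p : ℝ} (hp : 0 < p) {dA : A → A → ℝ≥0∞} {dB : B → B → ℝ≥0∞} {μ ν : Measure (A × Measure B)}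
    (h : CWbar p dA dB μ ν = 0) {δ : ℝ≥0∞} (hδ : 0 < δ) :
    ∃ γ ∈ Cpl μ ν, ∃ η, IsCondBar γ η ∧
      ∫⁻ z, (dA z.1.1 z.2.1 ^ p + Wp p dB (η z) z.2.2 ^ p) ∂γ < δ := by
  have hlt : CWbar p dA dB μ ν < δ ^ (1 / p) := h ▸ ENNReal.rpow_pos_of_nonneg hδ (by positivity)
  simp only [CWbar, iInf_lt_iff] at hlt
  obtain ⟨γ, hγ, η, hη, hlt⟩ := hlt
  exact ⟨γ, hγ, η, hη, (ENNReal.rpow_lt_rpow_iff (by positivity)).1 hlt⟩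

variable {A B : Type*} [PseudoEMetricSpace A] [PseudoEMetricSpace B] [MeasurableSpace B]
  [OpensMeasurableSpace B] {p : ℝ} {G : A →ᵇ ℝ} {F : B →ᵇ ℝ}

lemma exists_edist_testFun_le (hp : 0 < p) (hG : UniformContinuous G)
    (hF : UniformContinuous F) {ε : ℝ≥0∞} (hε : 0 < ε) :
    ∃ K : NNReal, ∀ x y, ∀ m n : Measure B, IsProbabilityMeasure m → IsProbabilityMeasure n →
      edist (G x) (G y) + edist (∫ x, F x ∂m) (∫ x, F x ∂n) ≤
        ε + K * (edist x y ^ p + Wp p edist m n ^ p) := by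
  obtain ⟨K₁, hK₁⟩ := exists_edist_le_add_mul_rpow hp hG (fun x y => G.dist_le_two_norm x y)
    (ENNReal.half_pos hε.ne')
  obtain ⟨K₂, hK₂⟩ := exists_edist_le_add_mul_rpow hp hF (fun x y => F.dist_le_two_norm x y)
    (ENNReal.half_pos hε.ne')
  refine ⟨max K₁ K₂, fun x y m n hm hn => ?_⟩
  calc edist (G x) (G y) + edist (∫ x, F x ∂m) (∫ x, F x ∂n)
      ≤ (ε / 2 + K₁ * edist x y ^ p) + (ε / 2 + K₂ * Wp p edist m n ^ p) :=
        add_le_add (hK₁ x y)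
          (edist_integral_le_add_mul_Wp_rpow hp hK₂ (F.integrable m) (F.integrable n))
    _ = ε + (K₁ * edist x y ^ p + K₂ * Wp p edist m n ^ p) := by
        rw [add_add_add_comm, ENNReal.add_halves]
    _ ≤ ε + ↑(max K₁ K₂) * (edist x y ^ p + Wp p edist m n ^ p) := by
        rw [mul_add]
        gcongr
        exacts [le_max_left _ _, le_max_right _ _]

variable [MeasurableSpace A] [OpensMeasurableSpace A] {μ ν : Measure (A × Measure B)}
  [IsFiniteMeasure μ] {φ : ℝ → ℝ}

lemma ofReal_integral_testFun_sub_le_of_CWbar_eq_zero (hμ : ∀ᵐ z ∂μ, IsProbabilityMeasure z.2)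
    (hν : ∀ᵐ z ∂ν, IsProbabilityMeasure z.2) (hp : 0 < p) (h : CWbar p edist edist μ ν = 0)
    (hG : UniformContinuous G) (hF : UniformContinuous F) (hφ : ConvexOn ℝ Set.univ φ)
    {L : NNReal} (hL : LipschitzOnWith L φ (Set.Icc (-(‖G‖ + ‖F‖)) (‖G‖ + ‖F‖)))
    {ε : ℝ≥0∞} (hε : 0 < ε) :
    ENNReal.ofReal (∫ z, φ (testFun G F z) ∂ν - ∫ z, φ (testFun G F z) ∂μ) ≤
      L * (ε * μ Set.univ + ε) := by
  obtain ⟨K, hK⟩ := exists_edist_testFun_le hp hG hF hε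
  obtain ⟨γ, ⟨rfl, rfl⟩, η, hη, hlt⟩ := exists_lintegral_lt_of_CWbar_eq_zero hp h
    (ENNReal.div_pos hε.ne' (ENNReal.coe_ne_top (r := K)))
  have hφT : StronglyMeasurable fun z => φ (testFun G F z) :=
    (hφ.locallyLipschitz.continuous.measurable.comp (measurable_testFun G F)).stronglyMeasurable
  have : IsFiniteMeasure γ := (Measure.isFiniteMeasure_map_iff measurable_fst.aemeasurable).1 ‹_›
  have hγ₁ := ae_of_ae_map measurable_fst.aemeasurable hμ
  have hγ₂ := ae_of_ae_map measurable_snd.aemeasurable hν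
  rw [integral_map measurable_snd.aemeasurable hφT.aestronglyMeasurable,
    integral_map measurable_fst.aemeasurable hφT.aestronglyMeasurable,
    Measure.map_apply measurable_fst .univ, Set.preimage_univ]
  refine (hη.integral_comp_testFun_sub_le hγ₁ hγ₂ hφ hL).trans ?_
  gcongr
  calc ∫⁻ z, (edist (G z.1.1) (G z.2.1) + edist (∫ x, F x ∂η z) (∫ x, F x ∂z.2.2)) ∂γ
      ≤ ∫⁻ z, (ε + K * (edist z.1.1 z.2.1 ^ p + Wp p edist (η z) z.2.2 ^ p)) ∂γ :=
        lintegral_mono_ae (hγ₂.mono fun z hz => hK _ _ _ _ (hη.2.1 z) hz)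
    _ = ε * γ Set.univ +
          K * ∫⁻ z, (edist z.1.1 z.2.1 ^ p + Wp p edist (η z) z.2.2 ^ p) ∂γ := by
        rw [lintegral_add_left measurable_const, lintegral_const,
          lintegral_const_mul' _ _ ENNReal.coe_ne_top]
    _ ≤ ε * γ Set.univ + K * (ε / K) := by gcongr
    _ ≤ ε * γ Set.univ + ε := by gcongr; exact ENNReal.mul_div_le

lemma integral_convexOn_testFun_le_of_CWbar_eq_zero (hμ : ∀ᵐ z ∂μ, IsProbabilityMeasure z.2)
    (hν : ∀ᵐ z ∂ν, IsProbabilityMeasure z.2) (hp : 0 < p) (h : CWbar p edist edist μ ν = 0)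
    (hG : UniformContinuous G) (hF : UniformContinuous F) (hφ : ConvexOn ℝ Set.univ φ) :
    ∫ z, φ (testFun G F z) ∂ν ≤ ∫ z, φ (testFun G F z) ∂μ := by
  obtain ⟨L, hL⟩ := (hφ.locallyLipschitz.locallyLipschitzOn
    (s := Set.Icc (-(‖G‖ + ‖F‖)) (‖G‖ + ‖F‖))).exists_lipschitzOnWith_of_compact isCompact_Icc
  have hlim : Tendsto (fun ε : ℝ≥0∞ => L * (ε * μ Set.univ + ε)) (𝓝[>] 0)
      (𝓝 (L * (0 * μ Set.univ + 0))) :=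
    (ENNReal.Tendsto.const_mul
      ((ENNReal.Tendsto.mul_const tendsto_id (.inr (measure_ne_top μ _))).add tendsto_id)
      (.inr ENNReal.coe_ne_top)).mono_left nhdsWithin_le_nhds
  simpa using ge_of_tendsto hlim (eventually_mem_nhdsWithin.mono fun ε hε =>
    ofReal_integral_testFun_sub_le_of_CWbar_eq_zero hμ hν hp h hG hF hφ hL hε)

end CWbar

section ExponentialMoments

variable {Ω : Type*} {mΩ : MeasurableSpace Ω} {μ ν : Measure Ω} [IsFiniteMeasure μ]
  [IsFiniteMeasure ν]

lemma map_eq_map_of_mgf_eq {X : Ω → ℝ} (hXμ : AEMeasurable X μ) (hXν : AEMeasurable X ν)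
    (hint : ∀ t, Integrable (fun ω => Real.exp (t * X ω)) μ) (h : mgf X μ = mgf X ν) :
    μ.map X = ν.map X := by
  have hzero : μ = 0 ↔ ν = 0 := by
    rw [← Measure.measure_univ_eq_zero, ← measureReal_eq_zero_iff, ← mgf_zero' (X := X), h,
      mgf_zero', measureReal_eq_zero_iff, Measure.measure_univ_eq_zero]
  have hexp : integrableExpSet X μ = Set.univ := Set.eq_univ_of_forall hint
  refine Measure.ext_of_complexMGF_eq hXμ hXν (funext fun z => ?_)
  exact eqOn_complexMGF_of_mgf' h hzero (by simp [hexp])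

variable {E : Type*} [AddCommGroup E] [Module ℝ E] {Φ : E →ₗ[ℝ] Ω → ℝ}

lemma map_linear_eq_of_integral_exp_eq (hΦ : ∀ e, Measurable (Φ e))
    (hint : ∀ e, Integrable (fun ω => Real.exp (Φ e ω)) μ)
    (h : ∀ e, ∫ ω, Real.exp (Φ e ω) ∂μ = ∫ ω, Real.exp (Φ e ω) ∂ν) (e : E) :
    μ.map (Φ e) = ν.map (Φ e) := by
  refine map_eq_map_of_mgf_eq (hΦ e).aemeasurable (hΦ e).aemeasurable (fun t => ?_)
    (funext fun t => ?_)
  · simpa using hint (t • e)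
  · simpa [mgf] using h (t • e)

-- The Cramér–Wold device: every linear combination of the coordinates is again some `Φ e`.
lemma map_pi_eq_of_forall_map_linear_eq (hΦ : ∀ e, Measurable (Φ e))
    (h : ∀ e, μ.map (Φ e) = ν.map (Φ e)) {ι : Type*} [Finite ι] (v : ι → E) :
    μ.map (fun ω i => Φ (v i) ω) = ν.map fun ω i => Φ (v i) ω := by
  classical
  cases nonempty_fintype ι
  have hv : Measurable fun ω i => Φ (v i) ω := measurable_pi_lambda _ fun i => hΦ (v i)
  refine Measure.ext_of_charFunDual (funext fun L => ?_)
  have hL : L ∘ (fun ω i => Φ (v i) ω) = Φ (∑ i, L (fun j => if i = j then 1 else 0) • v i) := by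
    ext ω
    simpa [mul_comm] using L.toLinearMap.pi_apply_eq_sum_univ fun i => Φ (v i) ω
  rw [charFunDual_eq_charFun_map_one, charFunDual_eq_charFun_map_one,
    Measure.map_map (by fun_prop) hv, Measure.map_map (by fun_prop) hv, hL, h]

lemma map_process_eq_of_forall_map_linear_eq (hΦ : ∀ e, Measurable (Φ e))
    (h : ∀ e, μ.map (Φ e) = ν.map (Φ e)) :
    μ.map (fun ω e => Φ e ω) = ν.map fun ω e => Φ e ω := by
  have hproc : AEMeasurable (fun ω e => Φ e ω) μ := (measurable_pi_lambda _ hΦ).aemeasurable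
  have hproc' : AEMeasurable (fun ω e => Φ e ω) ν := (measurable_pi_lambda _ hΦ).aemeasurable
  refine (isProjectiveLimit_map hproc).unique ?_
  convert isProjectiveLimit_map hproc' using 2 with I
  exact map_pi_eq_of_forall_map_linear_eq hΦ h fun e : I => (e : E)

theorem ext_of_integral_exp_linear_eq
    (hΦ : mΩ = MeasurableSpace.comap (fun ω e => Φ e ω) MeasurableSpace.pi)
    (hint : ∀ e, Integrable (fun ω => Real.exp (Φ e ω)) μ)
    (h : ∀ e, ∫ ω, Real.exp (Φ e ω) ∂μ = ∫ ω, Real.exp (Φ e ω) ∂ν) : μ = ν := by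
  have hproc : Measurable fun ω e => Φ e ω := measurable_iff_comap_le.2 hΦ.ge
  have hΦm : ∀ e, Measurable (Φ e) := measurable_pi_iff.1 hproc
  have hmap := map_process_eq_of_forall_map_linear_eq hΦm
    (map_linear_eq_of_integral_exp_eq hΦm hint h)
  ext s hs
  rw [hΦ] at hs
  obtain ⟨S, hS, rfl⟩ := hs
  rw [← Measure.map_apply hproc hS, hmap, Measure.map_apply hproc hS]

end ExponentialMoments

section UniformTestFunctions

open BoundedContinuousFunction

/-- The inclusion of `A × 𝒫(B)` into `A × Measure B`; a law on the latter whose second component is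
almost surely a probability measure is recovered from its pullback along it. -/
def probIncl {A B : Type*} [MeasurableSpace B] (z : A × ProbabilityMeasure B) : A × Measure B :=
  (z.1, (z.2 : Measure B))

lemma measurableEmbedding_probIncl {A B : Type*} [MeasurableSpace A] [MeasurableSpace B] :
    MeasurableEmbedding (probIncl : A × ProbabilityMeasure B → A × Measure B) :=
  .prodMap .id (.subtype_coe ProbabilityMeasure.measurableSet_isProbabilityMeasure)

lemma map_comap_probIncl {A B : Type*} [MeasurableSpace A] [MeasurableSpace B]
    {μ : Measure (A × Measure B)} (hμ : ∀ᵐ z ∂μ, IsProbabilityMeasure z.2) :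
    (μ.comap probIncl).map probIncl = μ := by
  rw [measurableEmbedding_probIncl.map_comap, Measure.restrict_eq_self_of_ae_mem]
  exact hμ.mono fun z hz => ⟨(z.1, ⟨z.2, hz⟩), rfl⟩

/-- The subspace of uniformly continuous functions among the bounded continuous ones, the test
functions that the Wasserstein cost controls. -/
def uniformFun (A : Type*) [UniformSpace A] : Submodule ℝ (A →ᵇ ℝ) where
  carrier := {f | UniformContinuous f}
  add_mem' hf hg := UniformContinuous.add hf hg
  zero_mem' := uniformContinuous_const
  smul_mem' c _ hf := UniformContinuous.const_smul hf c

/-- The real-valued thickened indicator of `E` as a member of `uniformFun`, used to detect closed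
sets. -/
def uniformThickenedIndicator {A : Type*} [PseudoEMetricSpace A] {δ : ℝ} (hδ : 0 < δ)
    (E : Set A) : uniformFun A :=
  ⟨(thickenedIndicator hδ E).comp _ NNReal.isometry_coe.lipschitz,
    NNReal.isometry_coe.uniformContinuous.comp
      (lipschitzWith_thickenedIndicator hδ E).uniformContinuous⟩

lemma uniformThickenedIndicator_apply {A : Type*} [PseudoEMetricSpace A] {δ : ℝ} (hδ : 0 < δ)
    (E : Set A) (x : A) :
    (uniformThickenedIndicator hδ E : A →ᵇ ℝ) x = thickenedIndicator hδ E x :=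
  rfl

/-- `testFun` as a linear map on pairs of bounded uniformly continuous functions, evaluated at
probability measures. -/
def testFunₗ (A B : Type*) [UniformSpace A] [UniformSpace B] [MeasurableSpace B]
    [OpensMeasurableSpace B] :
    uniformFun A × uniformFun B →ₗ[ℝ] A × ProbabilityMeasure B → ℝ where
  toFun f z := testFun (f.1 : A →ᵇ ℝ) f.2 (probIncl z)
  map_add' f g := by
    ext z
    have hint (F : uniformFun B) : Integrable (F : B →ᵇ ℝ) (z.2 : Measure B) :=
      F.1.integrable _
    simp [testFun, probIncl, integral_add (hint f.2) (hint g.2), add_add_add_comm]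
  map_smul' c f := by
    ext z
    simp [testFun, probIncl, integral_const_mul, mul_add]

lemma testFunₗ_apply {A B : Type*} [UniformSpace A] [UniformSpace B] [MeasurableSpace B]
    [OpensMeasurableSpace B] (f : uniformFun A × uniformFun B) (z : A × ProbabilityMeasure B) :
    testFunₗ A B f z = testFun (f.1 : A →ᵇ ℝ) f.2 (probIncl z) :=
  rfl

variable {Ω A B : Type*} [MeasurableSpace Ω] [PseudoEMetricSpace A] [MeasurableSpace A]
  [BorelSpace A] [PseudoEMetricSpace B] [MeasurableSpace B] [BorelSpace B]

lemma measurable_of_forall_uniformFun {u : Ω → A}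
    (hu : ∀ G : uniformFun A, Measurable fun ω => (G : A →ᵇ ℝ) (u ω)) : Measurable u := by
  refine measurable_of_isClosed fun C hC => ?_
  have hC_eq : C = (uniformThickenedIndicator one_pos C : A →ᵇ ℝ) ⁻¹' {1} := by
    ext x
    rw [Set.mem_preimage, Set.mem_singleton_iff, uniformThickenedIndicator_apply,
      NNReal.coe_eq_one]
    refine ⟨thickenedIndicator_one one_pos C, fun hx => ?_⟩
    rw [thickenedIndicator_apply, ENNReal.toNNReal_eq_one_iff, thickenedIndicatorAux,
      ENNReal.ofReal_one, div_one] at hx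
    rw [← hC.closure_eq, Metric.mem_closure_iff_infEDist_zero]
    by_contra hne
    exact (ENNReal.sub_lt_self ENNReal.one_ne_top one_ne_zero hne).ne hx
  rw [hC_eq, ← Set.preimage_comp]
  exact hu (uniformThickenedIndicator one_pos C) (measurableSet_singleton 1)

lemma measurable_of_forall_integral_uniformFun {κ : Ω → Measure B}
    [hκ : ∀ ω, IsProbabilityMeasure (κ ω)]
    (h : ∀ F : uniformFun B, Measurable fun ω => ∫ x, (F : B →ᵇ ℝ) x ∂κ ω) : Measurable κ := by
  refine .measure_of_isPiSystem_of_isProbabilityMeasure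
    (‹BorelSpace B›.measurable_eq.trans borel_eq_generateFrom_isClosed) isPiSystem_isClosed
    fun C hC => ?_
  have hδ : ∀ n : ℕ, (0 : ℝ) < 1 / (n + 1) := fun n => Nat.one_div_pos_of_nat
  have hlim := fun ω => tendsto_lintegral_thickenedIndicator_of_isClosed (κ ω) hC hδ
    tendsto_one_div_add_atTop_nhds_zero_nat
  refine measurable_of_tendsto_metrizable (fun n => ?_) (tendsto_pi_nhds.2 hlim)
  have hreal : ∀ ω, ∫⁻ x, thickenedIndicator (hδ n) C x ∂κ ω =
      ENNReal.ofReal (∫ x, (uniformThickenedIndicator (hδ n) C : B →ᵇ ℝ) x ∂κ ω) := fun ω => by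
    simp only [uniformThickenedIndicator_apply]
    rw [← toReal_lintegral_coe_eq_integral, ENNReal.ofReal_toReal
      (lintegral_lt_top_of_nnreal _ _).ne]
  simpa only [hreal] using (h _).ennreal_ofReal

lemma measurable_testFunₗ (f : uniformFun A × uniformFun B) : Measurable (testFunₗ A B f) :=
  (measurable_testFun f.1.1 f.2.1).comp measurableEmbedding_probIncl.measurable

lemma comap_testFunₗ_eq :
    MeasurableSpace.comap (fun z f => testFunₗ A B f z) MeasurableSpace.pi =
      Prod.instMeasurableSpace := by
  refine le_antisymm (measurable_pi_lambda _ measurable_testFunₗ).comap_le ?_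
  set m := MeasurableSpace.comap (fun z f => testFunₗ A B f z) MeasurableSpace.pi
  have hm (f : uniformFun A × uniformFun B) : Measurable[m] (testFunₗ A B f) :=
    measurable_pi_iff.1 (comap_measurable fun z f => testFunₗ A B f z) f
  have hfst : Measurable[m] (Prod.fst : A × ProbabilityMeasure B → A) :=
    measurable_of_forall_uniformFun fun G => by
      simpa [funext (testFunₗ_apply _), testFun, probIncl] using hm (G, 0)
  have hsnd : Measurable[m] (Prod.snd : A × ProbabilityMeasure B → ProbabilityMeasure B) :=
    .subtype_mk (measurable_of_forall_integral_uniformFun (hκ := fun z => z.2.2) fun F => by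
      simpa [funext (testFunₗ_apply _), testFun, probIncl] using hm (0, F))
  exact MeasurableSpace.comap_id.ge.trans (hfst.prodMk hsnd).comap_le

theorem ext_of_integral_exp_testFun_eq {μ ν : Measure (A × Measure B)} [IsFiniteMeasure μ]
    [IsFiniteMeasure ν] (hμ : ∀ᵐ z ∂μ, IsProbabilityMeasure z.2)
    (hν : ∀ᵐ z ∂ν, IsProbabilityMeasure z.2)
    (h : ∀ (G : A →ᵇ ℝ) (F : B →ᵇ ℝ), UniformContinuous G → UniformContinuous F →
      ∫ z, Real.exp (testFun G F z) ∂μ = ∫ z, Real.exp (testFun G F z) ∂ν) :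
    μ = ν := by
  rw [← map_comap_probIncl hμ, ← map_comap_probIncl hν] at h ⊢
  congr 1
  refine ext_of_integral_exp_linear_eq (E := uniformFun A × uniformFun B) (Φ := testFunₗ A B)
    comap_testFunₗ_eq.symm (fun f => ?_) fun f => ?_
  · exact integrable_comp_of_ae_abs_le Real.continuous_exp
      (measurable_testFunₗ f).aestronglyMeasurable
      (.of_forall fun z => abs_testFun_le (z := probIncl z) f.1.1 f.2.1 z.2.2)
  · simpa only [measurableEmbedding_probIncl.integral_map, testFunₗ_apply] using
      h f.1 f.2 f.1.2 f.2.2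

end UniformTestFunctions

theorem CWbar_eq_zero_iff_general
    {X1 X2 : Type*} [PseudoEMetricSpace X1] [MeasurableSpace X1] [BorelSpace X1]
    [PseudoEMetricSpace X2] [MeasurableSpace X2] [BorelSpace X2]
    {p : ℝ} (hp : 0 < p) {μ ν : Measure (X1 × Measure X2)}
    [IsFiniteMeasure μ] [IsFiniteMeasure ν]
    (hμ : ∀ᵐ z ∂μ, IsProbabilityMeasure z.2) (hν : ∀ᵐ z ∂ν, IsProbabilityMeasure z.2)
    (h1 : CWbar p edist edist μ ν = 0) (h2 : CWbar p edist edist ν μ = 0) :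
    μ = ν :=
  ext_of_integral_exp_testFun_eq hμ hν fun _ _ hG hF => le_antisymm
    (integral_convexOn_testFun_le_of_CWbar_eq_zero hν hμ hp h2 hG hF convexOn_exp)
    (integral_convexOn_testFun_le_of_CWbar_eq_zero hμ hν hp h1 hG hF convexOn_exp)

/-- **Lemma 4.9 (Hausdorff property).**  If `CW̄_p(μ, ν) = CW̄_p(ν, μ) = 0` then
`μ = ν`. -/
theorem CWbar_eq_zero_iff
    {X1 X2 : Type} [MetricSpace X1] [CompleteSpace X1] [SecondCountableTopology X1]
    [MeasurableSpace X1] [BorelSpace X1] [Nonempty X1]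
    [MetricSpace X2] [CompleteSpace X2] [SecondCountableTopology X2]
    [MeasurableSpace X2] [BorelSpace X2] [Nonempty X2]
    (p : ℝ) (hp : 1 ≤ p)
    (μ ν : Measure (X1 × Measure X2))
    (hμ : MemPpLift p (edist : X1 → X1 → ℝ≥0∞) (edist : X2 → X2 → ℝ≥0∞) μ)
    (hν : MemPpLift p (edist : X1 → X1 → ℝ≥0∞) (edist : X2 → X2 → ℝ≥0∞) ν)
    (h1 : CWbar p (edist : X1 → X1 → ℝ≥0∞) (edist : X2 → X2 → ℝ≥0∞) μ ν = 0)
    (h2 : CWbar p (edist : X1 → X1 → ℝ≥0∞) (edist : X2 → X2 → ℝ≥0∞) ν μ = 0) :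
    μ = ν := by
  have := hμ.1
  have := hν.1
  exact CWbar_eq_zero_iff_general (zero_lt_one.trans_le hp) (hμ.2.1.mono fun _ h => h.1)
    (hν.2.1.mono fun _ h => h.1) h1 h2

end AWPaper
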